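/- Let n ≥ 2, let 1 < p ≤ s < ∞, let α, σ > 0 satisfy 1 - n/p < α < n/p' (where p' = p/(p-1)), σ < n/s, and α + σ - 1 = n/s - n/p, and let 1 ≤ q₂ ≤ q₃ ≤ ∞. Define T f(x) = ∫_{ℝⁿ} |y|^{1-n} f(x - y) dy. Then there exists C > 0 such that ‖ |x|^{-σ} T f ‖_{s,q₃} ≤ C ‖ |x|^{α} f ‖_{p,q₂} for all measurable f : ℝⁿ → ℝ. -/

import Mathlib

open MeasureTheory Set ENNReal

/-- The distribution function `μ_f(λ) = μ{x : |f x| > λ}` of a function. -/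
noncomputable def distribFn {α : Type*} [MeasurableSpace α] (μ : Measure α)
    (f : α → ℝ) (l : ℝ≥0∞) : ℝ≥0∞ :=
  μ {x | l < ENNReal.ofReal |f x|}

/-- The decreasing rearrangement `f*(t) = inf {λ > 0 : μ_f(λ) ≤ t}`. -/
noncomputable def rearr {α : Type*} [MeasurableSpace α] (μ : Measure α)
    (f : α → ℝ) (t : ℝ) : ℝ≥0∞ :=
  sInf {l : ℝ≥0∞ | 0 < l ∧ distribFn μ f l ≤ ENNReal.ofReal t}

/-- The Lorentz `L^{p,q}` (quasi)norm
`‖f‖_{p,q} = (∫₀^∞ (t^{1/p} f*(t))^q dt/t)^{1/q}` for `q < ∞`, and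
`‖f‖_{p,∞} = sup_{t>0} t^{1/p} f*(t)`. -/
noncomputable def lorentz {α : Type*} [MeasurableSpace α] (μ : Measure α)
    (p q : ℝ≥0∞) (f : α → ℝ) : ℝ≥0∞ :=
  if q = ∞ then ⨆ t ∈ Ioi (0 : ℝ), ENNReal.ofReal t ^ p.toReal⁻¹ * rearr μ f t
  else (∫⁻ t in Ioi (0 : ℝ),
      (ENNReal.ofReal t ^ p.toReal⁻¹ * rearr μ f t) ^ q.toReal / ENNReal.ofReal t) ^ q.toReal⁻¹

/-- The potential operator `T`: convolution with the kernel `N(x) = |x|^{1-n}`. -/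
noncomputable def potl (n : ℕ) (f : EuclideanSpace ℝ (Fin n) → ℝ)
    (x : EuclideanSpace ℝ (Fin n)) : ℝ :=
  ∫ y, ‖y‖ ^ ((1 : ℝ) - (n : ℝ)) * f (x - y)

/-- Real powers of two, as extended nonnegative reals. -/
noncomputable def P2 (x : ℝ) : ℝ≥0∞ := (2 : ℝ≥0∞) ^ x

lemma P2_ne_zero (x : ℝ) : P2 x ≠ 0 := by
  unfold P2; simp [ENNReal.rpow_eq_zero_iff]

lemma P2_ne_top (x : ℝ) : P2 x ≠ ∞ := by
  unfold P2; simp [ENNReal.rpow_eq_top_iff]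

lemma P2_add (x y : ℝ) : P2 (x + y) = P2 x * P2 y := by
  unfold P2; exact ENNReal.rpow_add x y (by simp) (by simp)

lemma P2_zero : P2 0 = 1 := by unfold P2; simp

lemma P2_rpow (x y : ℝ) : P2 x ^ y = P2 (x * y) := by
  unfold P2; rw [ENNReal.rpow_mul]

lemma P2_mono {x y : ℝ} (h : x ≤ y) : P2 x ≤ P2 y := by
  unfold P2; exact ENNReal.rpow_le_rpow_of_exponent_le (by norm_num) h

lemma P2_lt {x y : ℝ} (h : x < y) : P2 x < P2 y := by
  unfold P2; exact ENNReal.rpow_lt_rpow_of_exponent_lt (by norm_num) (by simp) h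

lemma P2_one : P2 1 = 2 := by unfold P2; simp

lemma P2_ofReal (x : ℝ) : ENNReal.ofReal ((2 : ℝ) ^ x) = P2 x := by
  unfold P2
  rw [← ENNReal.ofReal_rpow_of_pos (by norm_num)]
  simp

lemma P2_geom_nat {δ : ℝ} (hδ : 0 < δ) : ∑' i : ℕ, P2 (-δ * i) ≠ ∞ := by
  have : ∀ i : ℕ, P2 (-δ * i) = (P2 (-δ)) ^ i := by
    intro i
    rw [← P2_rpow, ENNReal.rpow_natCast]
  simp_rw [this]
  rw [ENNReal.tsum_geometric]
  have h1 : P2 (-δ) < 1 := by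
    rw [← P2_zero]; exact P2_lt (by linarith)
  simp only [ne_eq, ENNReal.inv_eq_top]
  exact (tsub_pos_of_lt h1).ne'

lemma P2_geom_int {δ : ℝ} (hδ : 0 < δ) : ∑' i : ℤ, P2 (-δ * |(i : ℝ)|) ≠ ∞ := by
  have h : ∑' i : ℤ, P2 (-δ * |(i : ℝ)|) ≤
      ∑' i : ℕ, P2 (-δ * i) + ∑' i : ℕ, P2 (-δ * i) := by
    have h0 : ∀ i : ℤ, P2 (-δ * |(i : ℝ)|) = P2 (-δ * (i.natAbs : ℝ)) := by
      intro i
      congr 2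
      rw [Nat.cast_natAbs]; simp
    have := tsum_of_nat_of_neg_add_one (f := fun i : ℤ => P2 (-δ * |(i : ℝ)|))
      ENNReal.summable ENNReal.summable
    rw [this]
    gcongr with i i
    · simp
    · apply P2_mono
      have : |((-((i : ℤ) + 1) : ℤ) : ℝ)| = (i : ℝ) + 1 := by
        push_cast
        rw [abs_neg, abs_of_nonneg (by positivity)]
      rw [this]
      nlinarith
  exact ne_top_of_le_ne_top (ENNReal.add_ne_top.2 ⟨P2_geom_nat hδ, P2_geom_nat hδ⟩) h

/-- Discrete `ℓ^q` norm. -/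
noncomputable def lq (q : ℝ≥0∞) (a : ℤ → ℝ≥0∞) : ℝ≥0∞ :=
  if q = ∞ then ⨆ k, a k else (∑' k, a k ^ q.toReal) ^ q.toReal⁻¹

lemma toReal_ge_one {q : ℝ≥0∞} (hq : 1 ≤ q) (h : q ≠ ∞) : 1 ≤ q.toReal := by
  simpa using ENNReal.toReal_mono h hq

lemma le_lq {q : ℝ≥0∞} (hq : 1 ≤ q) (a : ℤ → ℝ≥0∞) (k : ℤ) : a k ≤ lq q a := by
  unfold lq
  split_ifs with h
  · exact le_iSup a k
  · have h1 := toReal_ge_one hq h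
    have : a k = (a k ^ q.toReal) ^ q.toReal⁻¹ := by
      rw [← ENNReal.rpow_mul, mul_inv_cancel₀ (by linarith), ENNReal.rpow_one]
    rw [this]
    gcongr
    exact ENNReal.le_tsum k

lemma lq_mono_exp {q r : ℝ≥0∞} (hq : 1 ≤ q) (hqr : q ≤ r) (a : ℤ → ℝ≥0∞) :
    lq r a ≤ lq q a := by
  by_cases hr : r = ∞
  · rw [lq, if_pos hr]
    exact iSup_le (le_lq hq a)
  have hq' : q ≠ ∞ := ne_top_of_le_ne_top hr hqr
  have h1 := toReal_ge_one hq hq'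
  have h2 : q.toReal ≤ r.toReal := ENNReal.toReal_mono hr hqr
  set M := lq q a with hM
  have hMq : ∑' k, a k ^ q.toReal = M ^ q.toReal := by
    rw [hM, lq, if_neg hq', ← ENNReal.rpow_mul, inv_mul_cancel₀ (by linarith), ENNReal.rpow_one]
  rw [lq, if_neg hr]
  have : ∑' k, a k ^ r.toReal ≤ M ^ r.toReal := by
    calc ∑' k, a k ^ r.toReal ≤ ∑' k, a k ^ q.toReal * M ^ (r.toReal - q.toReal) := by
          apply ENNReal.tsum_le_tsum
          intro k
          have : r.toReal = q.toReal + (r.toReal - q.toReal) := by ring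
          conv_lhs => rw [this]
          rw [ENNReal.rpow_add_of_nonneg _ _ (by linarith) (by linarith)]
          gcongr
          exact le_lq hq a k
      _ = M ^ r.toReal := by
          rw [ENNReal.tsum_mul_right, hMq, ← ENNReal.rpow_add_of_nonneg _ _ (by linarith) (by linarith)]
          congr 1; ring
  calc _ ≤ (M ^ r.toReal) ^ r.toReal⁻¹ := by gcongr
    _ = M := by rw [← ENNReal.rpow_mul, mul_inv_cancel₀ (by linarith), ENNReal.rpow_one]

lemma tsum_jensen (w a : ℤ → ℝ≥0∞) {r : ℝ} (hr : 1 ≤ r) :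
    (∑' k, w k * a k) ^ r ≤ (∑' k, w k) ^ (r - 1) * ∑' k, w k * a k ^ r := by
  rcases hr.eq_or_lt with rfl | hr
  · simp
  have hc := Real.HolderConjugate.conjExponent hr
  set s := Real.conjExponent r with hs
  have hs0 : 0 < s := hc.symm.pos
  have hr0 : 0 < r := by linarith
  have key := ENNReal.lintegral_mul_le_Lp_mul_Lq (Measure.count : Measure ℤ) hc
    (f := fun k => w k ^ r⁻¹ * a k) (g := fun k => w k ^ s⁻¹)
    (by fun_prop) (by fun_prop)
  simp only [lintegral_count, Pi.mul_apply] at key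
  have e1 : ∀ k, w k ^ r⁻¹ * a k * w k ^ s⁻¹ = w k * a k := by
    intro k
    rw [mul_right_comm, ← ENNReal.rpow_add_of_nonneg _ _ (by positivity) (by positivity),
      hc.inv_add_inv_eq_one, ENNReal.rpow_one]
  have e2 : ∀ k, (w k ^ r⁻¹ * a k) ^ r = w k * a k ^ r := by
    intro k
    rw [ENNReal.mul_rpow_of_nonneg _ _ hr0.le, ← ENNReal.rpow_mul, inv_mul_cancel₀ hr0.ne',
      ENNReal.rpow_one]
  have e3 : ∀ k, (w k ^ s⁻¹) ^ s = w k := by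
    intro k
    rw [← ENNReal.rpow_mul, inv_mul_cancel₀ hs0.ne', ENNReal.rpow_one]
  simp only [e1, e2, e3] at key
  calc _ ≤ _ := ENNReal.rpow_le_rpow key hr0.le
    _ = _ := by
      rw [ENNReal.mul_rpow_of_nonneg _ _ hr0.le, ← ENNReal.rpow_mul, ← ENNReal.rpow_mul,
        one_div_mul_cancel hr0.ne', ENNReal.rpow_one, mul_comm]
      congr 2
      rw [hs, Real.conjExponent]
      field_simp

lemma lq_young {q : ℝ≥0∞} (hq : 1 ≤ q) (w a b : ℤ → ℝ≥0∞) (C : ℝ≥0∞)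
    (hb : ∀ j, b j ≤ C * ∑' k, w (j - k) * a k) :
    lq q b ≤ C * (∑' k, w k) * lq q a := by
  have hW1 : ∀ j, ∑' k, w (j - k) = ∑' k, w k := fun j => (Equiv.subLeft j).tsum_eq w
  have hW2 : ∀ k, ∑' j, w (j - k) = ∑' j, w j := fun k => (Equiv.subRight k).tsum_eq w
  by_cases hq' : q = ∞
  · rw [lq, if_pos hq']
    refine iSup_le fun j => (hb j).trans ?_
    rw [mul_assoc]
    gcongr
    rw [← hW1 j, ← ENNReal.tsum_mul_right]
    gcongr with k
    exact le_lq hq a k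
  have h1 := toReal_ge_one hq hq'
  set r := q.toReal with hr
  have hr0 : 0 < r := by linarith
  set W := ∑' k, w k with hW
  rw [lq, lq, if_neg hq', if_neg hq', ← hr]
  have : ∑' j, b j ^ r ≤ (C * W) ^ r * ∑' k, a k ^ r := by
    calc ∑' j, b j ^ r ≤ ∑' j, C ^ r * (W ^ (r - 1) * ∑' k, w (j - k) * a k ^ r) := by
          apply ENNReal.tsum_le_tsum
          intro j
          calc b j ^ r ≤ (C * ∑' k, w (j - k) * a k) ^ r := by gcongr; exact hb j
            _ = C ^ r * (∑' k, w (j - k) * a k) ^ r := ENNReal.mul_rpow_of_nonneg _ _ hr0.le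
            _ ≤ _ := by
              gcongr
              have := tsum_jensen (fun k => w (j - k)) a h1
              rwa [hW1 j] at this
      _ = C ^ r * (W ^ (r - 1) * ∑' j, ∑' k, w (j - k) * a k ^ r) := by
          rw [ENNReal.tsum_mul_left, ENNReal.tsum_mul_left]
      _ = C ^ r * (W ^ (r - 1) * (W * ∑' k, a k ^ r)) := by
          rw [ENNReal.tsum_comm]
          simp_rw [ENNReal.tsum_mul_right, hW2]
          rw [ENNReal.tsum_mul_left]
      _ = _ := by
          rw [ENNReal.mul_rpow_of_nonneg _ _ hr0.le, mul_assoc, ← mul_assoc (W ^ (r - 1))]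
          congr 3
          nth_rw 2 [← ENNReal.rpow_one W]
          rw [← ENNReal.rpow_add_of_nonneg _ _ (by linarith) (by norm_num)]
          congr 1; ring
  calc _ ≤ ((C * W) ^ r * ∑' k, a k ^ r) ^ r⁻¹ := by gcongr
    _ = _ := by
      rw [ENNReal.mul_rpow_of_nonneg _ _ (by positivity), ← ENNReal.rpow_mul,
        mul_inv_cancel₀ hr0.ne', ENNReal.rpow_one]

lemma rearr_anti {β : Type*} [MeasurableSpace β] (μ : Measure β) (f : β → ℝ) :
    Antitone (rearr μ f) := by
  intro t u htu
  unfold rearr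
  apply sInf_le_sInf
  rintro l ⟨h1, h2⟩
  exact ⟨h1, h2.trans (ENNReal.ofReal_le_ofReal htu)⟩

lemma distrib_rearr_le {β : Type*} [MeasurableSpace β] (μ : Measure β) (f : β → ℝ) (t : ℝ) :
    distribFn μ f (rearr μ f t) ≤ ENNReal.ofReal t := by
  set S := {l : ℝ≥0∞ | 0 < l ∧ distribFn μ f l ≤ ENNReal.ofReal t} with hS
  have hne : S.Nonempty := ⟨∞, by simp, by simp [distribFn]⟩
  obtain ⟨u, hu, hlim, hmem⟩ := exists_seq_tendsto_sInf hne (OrderBot.bddBelow S)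
  have hset : {x | rearr μ f t < ENNReal.ofReal |f x|} ⊆ ⋃ i, {x | u i < ENNReal.ofReal |f x|} := by
    intro x hx
    have : ∀ᶠ i in Filter.atTop, u i < ENNReal.ofReal |f x| := hlim.eventually_lt_const hx
    obtain ⟨i, hi⟩ := this.exists
    exact mem_iUnion.2 ⟨i, hi⟩
  have hmono : Monotone fun i => {x | u i < ENNReal.ofReal |f x|} := by
    intro i k hik x hx
    exact lt_of_le_of_lt (hu hik) hx
  calc distribFn μ f (rearr μ f t) ≤ μ (⋃ i, {x | u i < ENNReal.ofReal |f x|}) := measure_mono hset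
    _ = ⨆ i, μ {x | u i < ENNReal.ofReal |f x|} := hmono.measure_iUnion
    _ ≤ _ := iSup_le fun i => (hmem i).2

lemma rearr_le_of_forall_lt {β : Type*} [MeasurableSpace β] (μ : Measure β) (f : β → ℝ) (t : ℝ)
    (A : ℝ≥0∞) (h : ∀ l, A < l → distribFn μ f l ≤ ENNReal.ofReal t) : rearr μ f t ≤ A := by
  refine le_of_forall_gt_imp_ge_of_dense fun l hl => ?_
  exact sInf_le ⟨bot_le.trans_lt hl, h l hl⟩

lemma Ioi_eq_iUnion : Ioi (0 : ℝ) = ⋃ j : ℤ, Ico ((2 : ℝ) ^ (j : ℝ)) ((2 : ℝ) ^ ((j : ℝ) + 1)) := by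
  ext t
  simp only [mem_Ioi, mem_iUnion]
  constructor
  · intro ht
    obtain ⟨j, hj⟩ := exists_mem_Ico_zpow ht (by norm_num : (1 : ℝ) < 2)
    refine ⟨j, ?_⟩
    rw [Real.rpow_intCast]
    have : (j : ℝ) + 1 = ((j + 1 : ℤ) : ℝ) := by push_cast; ring
    rw [this, Real.rpow_intCast]
    exact hj
  · rintro ⟨j, hj⟩
    exact lt_of_lt_of_le (by positivity) hj.1

lemma Ico_disj : Pairwise (Function.onFun Disjoint
    fun j : ℤ => Ico ((2 : ℝ) ^ (j : ℝ)) ((2 : ℝ) ^ ((j : ℝ) + 1))) := by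
  have key : ∀ i j : ℤ, i < j → Disjoint (Ico ((2 : ℝ) ^ (i : ℝ)) ((2 : ℝ) ^ ((i : ℝ) + 1)))
      (Ico ((2 : ℝ) ^ (j : ℝ)) ((2 : ℝ) ^ ((j : ℝ) + 1))) := by
    intro i j hij
    rw [Set.disjoint_left]
    rintro t ht ht'
    have : (2 : ℝ) ^ ((i : ℝ) + 1) ≤ (2 : ℝ) ^ (j : ℝ) := by
      apply Real.rpow_le_rpow_of_exponent_le (by norm_num)
      exact_mod_cast hij
    linarith [ht.2, ht'.1]
  intro i j hij
  rcases lt_or_gt_of_ne hij with h | h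
  · exact key i j h
  · exact (key j i h).symm

lemma Ico_vol (j : ℤ) : volume (Ico ((2 : ℝ) ^ (j : ℝ)) ((2 : ℝ) ^ ((j : ℝ) + 1))) = P2 j := by
  rw [Real.volume_Ico, ← P2_ofReal]
  congr 1
  rw [Real.rpow_add (by norm_num)]
  norm_num
  ring

lemma lintegral_dyadic (F : ℝ → ℝ≥0∞) : ∫⁻ t in Ioi (0 : ℝ), F t =
    ∑' j : ℤ, ∫⁻ t in Ico ((2 : ℝ) ^ (j : ℝ)) ((2 : ℝ) ^ ((j : ℝ) + 1)), F t := by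
  rw [Ioi_eq_iUnion, lintegral_iUnion (fun _ => measurableSet_Ico) Ico_disj]

/-- The dyadic sequence of a function. -/
noncomputable def dy {β : Type*} [MeasurableSpace β] (μ : Measure β) (x : ℝ) (f : β → ℝ) (j : ℤ) :
    ℝ≥0∞ := P2 (j * x) * rearr μ f ((2 : ℝ) ^ (j : ℝ))

lemma ofReal_bounds {t : ℝ} {j : ℤ} (ht : t ∈ Ico ((2 : ℝ) ^ (j : ℝ)) ((2 : ℝ) ^ ((j : ℝ) + 1))) :
    P2 j ≤ ENNReal.ofReal t ∧ ENNReal.ofReal t ≤ P2 (j + 1) := by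
  rw [← P2_ofReal, ← P2_ofReal]
  exact ⟨ENNReal.ofReal_le_ofReal ht.1, ENNReal.ofReal_le_ofReal ht.2.le⟩

lemma dy_upper {β : Type*} [MeasurableSpace β] (μ : Measure β) {x : ℝ} (hx : 0 ≤ x) (f : β → ℝ)
    {t : ℝ} {j : ℤ} (ht : t ∈ Ico ((2 : ℝ) ^ (j : ℝ)) ((2 : ℝ) ^ ((j : ℝ) + 1))) :
    ENNReal.ofReal t ^ x * rearr μ f t ≤ P2 x * dy μ x f j := by
  calc _ ≤ (P2 (j + 1)) ^ x * rearr μ f ((2 : ℝ) ^ (j : ℝ)) := by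
        gcongr
        · exact (ofReal_bounds ht).2
        · exact rearr_anti μ f ht.1
    _ = _ := by
        rw [P2_rpow, dy, ← mul_assoc, ← P2_add]
        congr 2; ring

lemma dy_lower {β : Type*} [MeasurableSpace β] (μ : Measure β) {x : ℝ} (hx : 0 ≤ x) (f : β → ℝ)
    {t : ℝ} {j : ℤ} (ht : t ∈ Ico ((2 : ℝ) ^ (j : ℝ)) ((2 : ℝ) ^ ((j : ℝ) + 1))) :
    dy μ x f (j + 1) ≤ P2 x * (ENNReal.ofReal t ^ x * rearr μ f t) := by
  calc dy μ x f (j + 1) = P2 x * ((P2 j) ^ x * rearr μ f ((2 : ℝ) ^ ((j : ℝ) + 1))) := by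
        rw [P2_rpow, dy, ← mul_assoc, ← P2_add]
        push_cast
        congr 2; ring
    _ ≤ _ := by
        gcongr
        · exact (ofReal_bounds ht).1
        · exact rearr_anti μ f ht.2.le

lemma lorentz_le_lq {β : Type*} [MeasurableSpace β] (μ : Measure β) {s : ℝ} (hs : 0 < s)
    {q : ℝ≥0∞} (hq : 1 ≤ q) (f : β → ℝ) :
    lorentz μ (ENNReal.ofReal s) q f ≤ P2 s⁻¹ * lq q (dy μ s⁻¹ f) := by
  unfold lorentz
  rw [ENNReal.toReal_ofReal hs.le]
  have hx : 0 ≤ s⁻¹ := by positivity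
  split_ifs with h
  · refine iSup₂_le fun t ht => ?_
    rw [Ioi_eq_iUnion] at ht
    obtain ⟨j, hj⟩ := mem_iUnion.1 ht
    refine (dy_upper μ hx f hj).trans ?_
    gcongr
    exact le_lq hq _ j
  · have h1 := toReal_ge_one hq h
    rw [lq, if_neg h, lintegral_dyadic]
    set r := q.toReal
    have hr0 : 0 < r := by linarith
    calc _ ≤ (∑' j : ℤ, (P2 s⁻¹ * dy μ s⁻¹ f j) ^ r) ^ r⁻¹ := by
          gcongr with j
          calc _ ≤ ∫⁻ t in Ico ((2 : ℝ) ^ (j : ℝ)) ((2 : ℝ) ^ ((j : ℝ) + 1)),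
                (P2 s⁻¹ * dy μ s⁻¹ f j) ^ r / P2 j := by
                refine setLIntegral_mono' measurableSet_Ico fun t ht => ?_
                exact ENNReal.div_le_div (ENNReal.rpow_le_rpow (dy_upper μ hx f ht) hr0.le)
                  (ofReal_bounds ht).1
            _ = _ := by
                rw [setLIntegral_const, Ico_vol, ENNReal.div_mul_cancel (P2_ne_zero _) (P2_ne_top _)]
      _ = _ := by
          simp_rw [ENNReal.mul_rpow_of_nonneg _ _ hr0.le]
          rw [ENNReal.tsum_mul_left, ENNReal.mul_rpow_of_nonneg _ _ (by positivity),
            ← ENNReal.rpow_mul, mul_inv_cancel₀ hr0.ne', ENNReal.rpow_one]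

lemma lq_le_lorentz {β : Type*} [MeasurableSpace β] (μ : Measure β) {s : ℝ} (hs : 0 < s)
    {q : ℝ≥0∞} (hq : 1 ≤ q) (f : β → ℝ) :
    lq q (dy μ s⁻¹ f) ≤ 2 * P2 s⁻¹ * lorentz μ (ENNReal.ofReal s) q f := by
  unfold lorentz
  rw [ENNReal.toReal_ofReal hs.le]
  have hx : 0 ≤ s⁻¹ := by positivity
  have hmem : ∀ j : ℤ, (2 : ℝ) ^ (j : ℝ) ∈ Ico ((2 : ℝ) ^ (j : ℝ)) ((2 : ℝ) ^ ((j : ℝ) + 1)) := by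
    intro j
    exact ⟨le_rfl, Real.rpow_lt_rpow_of_exponent_lt (by norm_num) (by linarith)⟩
  split_ifs with h
  · rw [lq, if_pos h]
    refine iSup_le fun j => ?_
    have := dy_lower μ hx f (hmem (j - 1))
    rw [sub_add_cancel] at this
    refine this.trans ?_
    rw [mul_comm 2, mul_assoc]
    gcongr P2 s⁻¹ * ?_
    refine le_trans ?_ (le_mul_of_one_le_left' (by norm_num : (1 : ℝ≥0∞) ≤ 2))
    exact le_iSup₂ (f := fun t (_ : t ∈ Ioi (0 : ℝ)) => ENNReal.ofReal t ^ s⁻¹ * rearr μ f t)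
      ((2 : ℝ) ^ ((j - 1 : ℤ) : ℝ)) (by simp only [mem_Ioi]; positivity)
  · have h1 := toReal_ge_one hq h
    rw [lq, if_neg h, lintegral_dyadic]
    set r := q.toReal
    have hr0 : 0 < r := by linarith
    have e : ∑' k : ℤ, dy μ s⁻¹ f k ^ r = ∑' k : ℤ, dy μ s⁻¹ f (k + 1) ^ r :=
      ((Equiv.addRight (1 : ℤ)).tsum_eq (fun k => dy μ s⁻¹ f k ^ r)).symm
    rw [e]
    set I : ℤ → ℝ≥0∞ := fun j => ∫⁻ t in Ico ((2 : ℝ) ^ (j : ℝ)) ((2 : ℝ) ^ ((j : ℝ) + 1)),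
      (ENNReal.ofReal t ^ s⁻¹ * rearr μ f t) ^ r / ENNReal.ofReal t with hI
    have key : ∀ j : ℤ, dy μ s⁻¹ f (j + 1) ^ r ≤ (2 * P2 s⁻¹) ^ r * I j := by
      intro j
      calc dy μ s⁻¹ f (j + 1) ^ r = 2 * ((dy μ s⁻¹ f (j + 1) ^ r / P2 (j + 1)) * P2 j) := by
            rw [P2_add, P2_one, div_eq_mul_inv, ENNReal.mul_inv (by simp) (by simp)]
            have h2 := ENNReal.inv_mul_cancel (P2_ne_zero j) (P2_ne_top j)
            have h3 := ENNReal.mul_inv_cancel (a := 2) (by simp) (by simp)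
            calc _ = dy μ s⁻¹ f (j + 1) ^ r * (2 * 2⁻¹) * ((P2 j)⁻¹ * P2 j) := by
                  rw [h2, h3]; simp
              _ = _ := by ring
        _ = 2 * ∫⁻ t in Ico ((2 : ℝ) ^ (j : ℝ)) ((2 : ℝ) ^ ((j : ℝ) + 1)),
              dy μ s⁻¹ f (j + 1) ^ r / P2 (j + 1) := by
            rw [setLIntegral_const, Ico_vol]
        _ ≤ 2 * ∫⁻ t in Ico ((2 : ℝ) ^ (j : ℝ)) ((2 : ℝ) ^ ((j : ℝ) + 1)),
              (P2 s⁻¹) ^ r * ((ENNReal.ofReal t ^ s⁻¹ * rearr μ f t) ^ r / ENNReal.ofReal t) := by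
            gcongr 2 * ?_
            refine setLIntegral_mono' measurableSet_Ico fun t ht => ?_
            rw [← mul_div_assoc, ← ENNReal.mul_rpow_of_nonneg _ _ hr0.le]
            gcongr
            · exact dy_lower μ hx f ht
            · exact (ofReal_bounds ht).2
        _ = 2 * ((P2 s⁻¹) ^ r * I j) := by
            rw [lintegral_const_mul' _ _ (ENNReal.rpow_ne_top_of_nonneg hr0.le (P2_ne_top _))]
        _ ≤ 2 ^ r * ((P2 s⁻¹) ^ r * I j) := by
            gcongr
            calc (2 : ℝ≥0∞) = 2 ^ (1 : ℝ) := by simp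
              _ ≤ 2 ^ r := ENNReal.rpow_le_rpow_of_exponent_le (by norm_num) h1
        _ = _ := by rw [ENNReal.mul_rpow_of_nonneg _ _ hr0.le, mul_assoc]
    calc _ ≤ (∑' j : ℤ, (2 * P2 s⁻¹) ^ r * I j) ^ r⁻¹ := by
          gcongr with j
          exact key j
      _ = _ := by
          rw [ENNReal.tsum_mul_left, ENNReal.mul_rpow_of_nonneg _ _ (by positivity),
            ← ENNReal.rpow_mul, mul_inv_cancel₀ hr0.ne', ENNReal.rpow_one]

lemma rpow_neg_anti {a b : ℝ≥0∞} (h : a ≤ b) {β : ℝ} (hβ : 0 ≤ β) : b ^ (-β) ≤ a ^ (-β) := by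
  rw [ENNReal.rpow_neg, ENNReal.rpow_neg]
  exact ENNReal.inv_le_inv.2 (ENNReal.rpow_le_rpow h hβ)

lemma vol_eball (n : ℕ) (x : EuclideanSpace ℝ (Fin n)) {ρ : ℝ≥0∞} (hρ : ρ ≠ ∞) :
    volume {y | ‖x - y‖ₑ ≤ ρ} ≤
      volume (Metric.ball (0 : EuclideanSpace ℝ (Fin n)) 1) * ρ ^ (n : ℝ) := by
  have hset : {y | ‖x - y‖ₑ ≤ ρ} ⊆ Metric.closedBall x ρ.toReal := by
    intro y hy
    change ‖x - y‖ₑ ≤ ρ at hy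
    rw [Metric.mem_closedBall, dist_comm, dist_eq_norm]
    have := ENNReal.toReal_mono hρ hy
    simpa using this
  refine (measure_mono hset).trans ?_
  rw [Measure.addHaar_closedBall _ _ ENNReal.toReal_nonneg, mul_comm, ENNReal.rpow_natCast]
  gcongr
  rw [finrank_euclideanSpace, Fintype.card_fin, ENNReal.ofReal_pow ENNReal.toReal_nonneg,
    ENNReal.ofReal_toReal hρ]

lemma kernel_pointwise {β : ℝ} (hβ : 0 ≤ β) (r z : ℝ≥0∞) (hr0 : r ≠ 0) (hr : r ≠ ∞)
    (hz0 : z ≠ 0) :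
    z ^ (-β) ≤ r ^ (-β) + ∑' i : ℕ, (P2 (-i) * r) ^ (-β) *
      {y : ℝ≥0∞ | y ≤ P2 (1 - i) * r}.indicator 1 z := by
  rcases le_total r z with h | h
  · exact (rpow_neg_anti h hβ).trans le_self_add
  have hz : z ≠ ∞ := ne_top_of_le_ne_top hr h
  obtain ⟨j, hj1, hj2⟩ := ENNReal.exists_mem_Ico_zpow (x := z / r) (y := 2)
    (by simp [ENNReal.div_eq_zero_iff, hz0, hr]) (ENNReal.div_ne_top hz hr0)
    (by norm_num) (by simp)
  have hj0 : j ≤ 0 := by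
    by_contra hcon
    push Not at hcon
    have h1 : z / r ≤ 1 := ENNReal.div_le_of_le_mul (by simpa using h)
    have h2 : (2 : ℝ≥0∞) ≤ 2 ^ j := by
      calc (2 : ℝ≥0∞) = 2 ^ (1 : ℤ) := by simp
        _ ≤ 2 ^ j := ENNReal.zpow_le_of_le (by norm_num) (by omega)
    exact absurd (h2.trans (hj1.trans h1)) (by norm_num)
  obtain ⟨i, rfl⟩ : ∃ i : ℕ, j = -i := ⟨j.natAbs, by omega⟩
  have e1 : (2 : ℝ≥0∞) ^ (-(i : ℤ)) = P2 (-i) := by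
    unfold P2; rw [← ENNReal.rpow_intCast]; simp
  have e2 : (2 : ℝ≥0∞) ^ (-(i : ℤ) + 1) = P2 (1 - i) := by
    unfold P2; rw [← ENNReal.rpow_intCast]; congr 1; push_cast; ring
  rw [e1] at hj1
  rw [e2] at hj2
  have h3 : P2 (-i) * r ≤ z := by
    calc P2 (-i) * r ≤ z / r * r := by gcongr
      _ = z := ENNReal.div_mul_cancel hr0 hr
  have h4 : z ≤ P2 (1 - i) * r := by
    calc z = z / r * r := (ENNReal.div_mul_cancel hr0 hr).symm
      _ ≤ _ := by gcongr
  refine le_trans ?_ (le_trans (ENNReal.le_tsum i) le_add_self)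
  rw [indicator_of_mem (by exact h4)]
  simpa using rpow_neg_anti h3 hβ

lemma kernel_bound (n : ℕ) (hn : 2 ≤ n) {β : ℝ} (hβ : 0 ≤ β) (hβn : β < n) :
    ∃ C : ℝ≥0∞, C ≠ ∞ ∧ ∀ (x : EuclideanSpace ℝ (Fin n)) (E : Set (EuclideanSpace ℝ (Fin n))),
      MeasurableSet E → ∫⁻ y in E, ‖x - y‖ₑ ^ (-β) ≤ C * volume E ^ (1 - β / n) := by
  have : Nonempty (Fin n) := ⟨⟨0, by omega⟩⟩
  have hn0 : (0 : ℝ) < n := by positivity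
  set ω := volume (Metric.ball (0 : EuclideanSpace ℝ (Fin n)) 1) with hω
  have hωt : ω ≠ ∞ := measure_ball_lt_top.ne
  have hex : 0 < 1 - β / n := by
    rw [sub_pos, div_lt_one hn0]; exact hβn
  refine ⟨1 + ω * P2 n * ∑' i : ℕ, P2 (-(n - β) * i), ?_, ?_⟩
  · refine ENNReal.add_ne_top.2 ⟨by simp, ENNReal.mul_ne_top (ENNReal.mul_ne_top hωt (P2_ne_top _)) ?_⟩
    exact P2_geom_nat (by linarith)
  intro x E hE
  by_cases hv0 : volume E = 0
  · rw [Measure.restrict_eq_zero.2 hv0]; simp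
  by_cases hvt : volume E = ∞
  · rw [hvt, ENNReal.top_rpow_of_pos hex, ENNReal.mul_top]
    · exact le_top
    · simp
  set v := volume E with hv
  set r := v ^ ((n : ℝ)⁻¹) with hr
  have hr0 : r ≠ 0 := by
    simp [hr, ENNReal.rpow_eq_zero_iff, hv0, hvt]
  have hrt : r ≠ ∞ := ENNReal.rpow_ne_top_of_nonneg (by positivity) hvt
  have hS : ∀ i : ℕ, MeasurableSet {y : ℝ≥0∞ | y ≤ P2 (1 - i) * r} := fun i => measurableSet_Iic
  have hae : ∀ᵐ y : EuclideanSpace ℝ (Fin n), ‖x - y‖ₑ ≠ 0 := by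
    have : ∀ᵐ y : EuclideanSpace ℝ (Fin n), y ≠ x := by
      simp [ae_iff]
    filter_upwards [this] with y hy
    simp only [ne_eq, enorm_eq_zero, sub_eq_zero]
    exact fun h => hy h.symm
  have hmeas : Measurable fun y : EuclideanSpace ℝ (Fin n) => ‖x - y‖ₑ := by fun_prop
  calc ∫⁻ y in E, ‖x - y‖ₑ ^ (-β)
      ≤ ∫⁻ y in E, (r ^ (-β) + ∑' i : ℕ, (P2 (-i) * r) ^ (-β) *
      {y : ℝ≥0∞ | y ≤ P2 (1 - i) * r}.indicator 1 (‖x - y‖ₑ)) := by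
        refine lintegral_mono_ae ?_
        filter_upwards [ae_restrict_of_ae hae] with y hy
        exact kernel_pointwise hβ r _ hr0 hrt hy
    _ = r ^ (-β) * v + ∑' i : ℕ, ∫⁻ y in E, (P2 (-i) * r) ^ (-β) *
      {y : ℝ≥0∞ | y ≤ P2 (1 - i) * r}.indicator 1 (‖x - y‖ₑ) := by
        rw [lintegral_add_left measurable_const, setLIntegral_const, lintegral_tsum]
        intro i
        refine Measurable.aemeasurable ?_
        refine Measurable.const_mul ?_ _
        exact (measurable_one.indicator (hS i)).comp hmeas
    _ ≤ r ^ (-β) * v + ∑' i : ℕ, (P2 (-i) * r) ^ (-β) * (ω * (P2 (1 - i) * r) ^ (n : ℝ)) := by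
        gcongr with i
        have hm : Measurable fun y : EuclideanSpace ℝ (Fin n) =>
            {y : ℝ≥0∞ | y ≤ P2 (1 - i) * r}.indicator (1 : ℝ≥0∞ → ℝ≥0∞) (‖x - y‖ₑ) :=
          (measurable_one.indicator (hS i)).comp hmeas
        rw [lintegral_const_mul _ hm]
        gcongr
        calc _ ≤ ∫⁻ y, {y : ℝ≥0∞ | y ≤ P2 (1 - i) * r}.indicator 1 (‖x - y‖ₑ) :=
              setLIntegral_le_lintegral _ _
          _ = ∫⁻ y, {y | ‖x - y‖ₑ ≤ P2 (1 - i) * r}.indicator 1 y := by rfl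
          _ = volume {y | ‖x - y‖ₑ ≤ P2 (1 - i) * r} := lintegral_indicator_one (hmeas (hS i))
          _ ≤ _ := vol_eball n x (ENNReal.mul_ne_top (P2_ne_top _) hrt)
    _ = _ := by
        have e0 : r ^ ((n : ℝ) - β) = v ^ (1 - β / n) := by
          rw [hr, ← ENNReal.rpow_mul]; congr 1; field_simp
        have e1 : r ^ (-β) * v = v ^ (1 - β / n) := by
          calc r ^ (-β) * v = v ^ ((n : ℝ)⁻¹ * -β) * v ^ (1 : ℝ) := by
                rw [hr, ← ENNReal.rpow_mul, ENNReal.rpow_one]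
            _ = _ := by
                rw [← ENNReal.rpow_add _ _ hv0 hvt]
                congr 1; field_simp; ring
        have e2 : ∀ i : ℕ, (P2 (-i) * r) ^ (-β) * (ω * (P2 (1 - i) * r) ^ (n : ℝ)) =
            (ω * P2 n * v ^ (1 - β / n)) * P2 (-(n - β) * i) := by
          intro i
          rw [ENNReal.mul_rpow_of_ne_zero (P2_ne_zero _) hr0,
            ENNReal.mul_rpow_of_ne_zero (P2_ne_zero _) hr0, P2_rpow, P2_rpow, ← e0]
          have e3 : P2 n * P2 (-(n - β) * i) = P2 (-i * -β) * P2 ((1 - i) * n) := by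
            rw [← P2_add, ← P2_add]; congr 1; ring
          have e4 : r ^ ((n : ℝ) - β) = r ^ (-β) * r ^ (n : ℝ) := by
            rw [← ENNReal.rpow_add _ _ hr0 hrt]; congr 1; ring
          rw [e4]
          calc _ = ω * (P2 (-i * -β) * P2 ((1 - i) * n)) * (r ^ (-β) * r ^ (n : ℝ)) := by ring
            _ = _ := by rw [← e3]; ring
        simp_rw [e2]
        rw [ENNReal.tsum_mul_left, e1]
        ring

/-- Kernel integral for a set. -/
noncomputable def VV (n : ℕ) (α : ℝ) (E : Set (EuclideanSpace ℝ (Fin n)))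
    (x : EuclideanSpace ℝ (Fin n)) : ℝ≥0∞ :=
  ∫⁻ y in E, ‖x - y‖ₑ ^ (-((n : ℝ) - 1)) * ‖y‖ₑ ^ (-α)

lemma VV_sup (n : ℕ) (hn : 2 ≤ n) {α : ℝ} (hα : 0 < α) (hα1 : α < 1) :
    ∃ C : ℝ≥0∞, C ≠ ∞ ∧ ∀ (x : EuclideanSpace ℝ (Fin n)) (E : Set (EuclideanSpace ℝ (Fin n))),
      MeasurableSet E → VV n α E x ≤ C * volume E ^ ((1 - α) / n) := by
  have hn1 : (2 : ℝ) ≤ n := by exact_mod_cast hn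
  obtain ⟨C, hC, h⟩ := kernel_bound n hn (β := n - 1 + α) (by linarith) (by linarith)
  refine ⟨2 * C, ENNReal.mul_ne_top (by simp) hC, fun x E hE => ?_⟩
  have hex : 1 - (n - 1 + α) / n = (1 - α) / (n : ℝ) := by field_simp; ring
  have hpt : ∀ a : ℝ≥0∞, a ≠ ∞ → a ^ (-((n : ℝ) - 1)) * a ^ (-α) ≤ a ^ (-(n - 1 + α)) := by
    intro a ha
    by_cases h0 : a = 0
    · rw [h0, ENNReal.zero_rpow_of_neg (y := -((n : ℝ) - 1 + α)) (by linarith)]; exact le_top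
    rw [← ENNReal.rpow_add _ _ h0 ha]
    apply le_of_eq; congr 1; ring
  calc VV n α E x ≤ ∫⁻ y in E, (‖x - y‖ₑ ^ (-(n - 1 + α)) + ‖0 - y‖ₑ ^ (-(n - 1 + α))) := by
        unfold VV
        refine lintegral_mono fun y => ?_
        simp only [zero_sub, enorm_neg]
        rcases le_total ‖x - y‖ₑ ‖y‖ₑ with h | h
        · refine le_trans ?_ le_self_add
          refine le_trans ?_ (hpt _ enorm_ne_top)
          exact mul_le_mul' le_rfl (rpow_neg_anti h hα.le)
        · refine le_trans ?_ le_add_self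
          refine le_trans ?_ (hpt _ enorm_ne_top)
          exact mul_le_mul' (rpow_neg_anti h (by linarith)) le_rfl
    _ = (∫⁻ y in E, ‖x - y‖ₑ ^ (-(n - 1 + α))) + ∫⁻ y in E, ‖0 - y‖ₑ ^ (-(n - 1 + α)) := by
        rw [lintegral_add_left (by fun_prop)]
    _ ≤ C * volume E ^ (1 - (n - 1 + α) / n) + C * volume E ^ (1 - (n - 1 + α) / n) := by
        gcongr
        · exact h x E hE
        · exact h 0 E hE
    _ = _ := by rw [hex]; ring

lemma VV_int (n : ℕ) (hn : 2 ≤ n) {α : ℝ} (hα : 0 < α) (hα1 : α < 1) :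
    ∃ C : ℝ≥0∞, C ≠ ∞ ∧ ∀ (B E : Set (EuclideanSpace ℝ (Fin n))),
      MeasurableSet B → MeasurableSet E →
      ∫⁻ x in B, VV n α E x ≤ C * volume B ^ (1 / (n : ℝ)) * volume E ^ (1 - α / n) := by
  have hn1 : (2 : ℝ) ≤ n := by exact_mod_cast hn
  obtain ⟨C, hC, h⟩ := kernel_bound n hn (β := n - 1) (by linarith) (by linarith)
  obtain ⟨C', hC', h'⟩ := kernel_bound n hn (β := α) (by linarith) (by linarith)
  refine ⟨C * C', ENNReal.mul_ne_top hC hC', fun B E hB hE => ?_⟩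
  unfold VV
  have hex : 1 - (n - 1) / n = 1 / (n : ℝ) := by field_simp; ring
  rw [lintegral_lintegral_swap (by fun_prop)]
  calc _ ≤ ∫⁻ y in E, C * volume B ^ (1 / (n : ℝ)) * ‖0 - y‖ₑ ^ (-α) := by
        refine lintegral_mono fun y => ?_
        rw [lintegral_mul_const _ (by fun_prop)]
        simp only [zero_sub, enorm_neg]
        gcongr
        have := h y B hB
        rw [hex] at this
        simpa only [← enorm_neg (y - _), neg_sub] using this
    _ = C * volume B ^ (1 / (n : ℝ)) * ∫⁻ y in E, ‖0 - y‖ₑ ^ (-α) := by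
        rw [lintegral_const_mul _ (by fun_prop)]
    _ ≤ C * volume B ^ (1 / (n : ℝ)) * (C' * volume E ^ (1 - α / n)) := by
        gcongr
        exact h' 0 E hE
    _ = _ := by ring

lemma VV_meas (n : ℕ) (α : ℝ) (E : Set (EuclideanSpace ℝ (Fin n))) : Measurable (VV n α E) := by
  unfold VV
  exact Measurable.lintegral_prod_right' (f := fun z : EuclideanSpace ℝ (Fin n) ×
    EuclideanSpace ℝ (Fin n) => ‖z.1 - z.2‖ₑ ^ (-((n : ℝ) - 1)) * ‖z.2‖ₑ ^ (-α)) (by fun_prop)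

lemma weak_of_int {β : Type*} [MeasurableSpace β] (μ : Measure β) [SigmaFinite μ]
    (F : β → ℝ≥0∞) (hF : Measurable F) {ν : ℝ} (hν1 : ν < 1) (D : ℝ≥0∞)
    (h : ∀ B, MeasurableSet B → ∫⁻ x in B, F x ∂μ ≤ D * μ B ^ ν) (τ : ℝ) (l : ℝ≥0∞)
    (hl : D * P2 (-τ * (1 - ν)) < l) : μ {x | l < F x} ≤ P2 τ := by
  by_contra hcon
  push Not at hcon
  obtain ⟨B, hB, hBs, hB1, hB2⟩ := Measure.exists_subset_measure_lt_top
    (measurableSet_lt measurable_const hF) hcon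
  have hB0 : μ B ≠ 0 := (bot_le.trans_lt hB1).ne'
  have h1 : l * μ B ≤ D * μ B ^ ν := by
    calc l * μ B = ∫⁻ x in B, l ∂μ := by rw [setLIntegral_const]
      _ ≤ ∫⁻ x in B, F x ∂μ := setLIntegral_mono' hB fun x hx => (hBs hx).le
      _ ≤ _ := h B hB
  have h2 : l ≤ D * μ B ^ (-(1 - ν)) := by
    have e1 : μ B * μ B ^ (-1 : ℝ) = 1 := by
      rw [ENNReal.rpow_neg_one]; exact ENNReal.mul_inv_cancel hB0 hB2.ne
    calc l = l * μ B * μ B ^ (-1 : ℝ) := by rw [mul_assoc, e1, mul_one]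
      _ ≤ D * μ B ^ ν * μ B ^ (-1 : ℝ) := by gcongr
      _ = _ := by
        rw [mul_assoc, ← ENNReal.rpow_add _ _ hB0 hB2.ne]
        congr 2; ring
  have h3 : D * μ B ^ (-(1 - ν)) ≤ D * P2 (-τ * (1 - ν)) := by
    gcongr
    calc μ B ^ (-(1 - ν)) ≤ P2 τ ^ (-(1 - ν)) := rpow_neg_anti hB1.le (by linarith)
      _ = _ := by rw [P2_rpow]; congr 1; ring
  exact absurd (h2.trans h3) (not_le.2 hl)

lemma weight_vol (n : ℕ) (hn : 2 ≤ n) {σ : ℝ} (hσ : 0 < σ) :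
    ∃ C : ℝ≥0∞, C ≠ ∞ ∧ C ≠ 0 ∧ ∀ τ : ℝ,
      volume {x : EuclideanSpace ℝ (Fin n) | C * P2 (-τ * (σ / n)) < ‖x‖ₑ ^ (-σ)} ≤ P2 τ := by
  have hn0 : (0 : ℝ) < n := by positivity
  set ω := volume (Metric.ball (0 : EuclideanSpace ℝ (Fin n)) 1) with hω
  have hωt : ω ≠ ∞ := measure_ball_lt_top.ne
  have hω0 : ω ≠ 0 := (Metric.measure_ball_pos _ _ (by norm_num)).ne'
  refine ⟨ω ^ (σ / n), ENNReal.rpow_ne_top_of_nonneg (by positivity) hωt,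
    by simp [ENNReal.rpow_eq_zero_iff, hω0, hωt], fun τ => ?_⟩
  set R := P2 (τ / n) * ω ^ (-(1 / (n : ℝ))) with hR
  have hωn0 : ω ^ (-(1 / (n : ℝ))) ≠ 0 := by simp [ENNReal.rpow_eq_zero_iff, hω0, hωt]
  have hωnt : ω ^ (-(1 / (n : ℝ))) ≠ ∞ := by simp [ENNReal.rpow_eq_top_iff, hω0, hωt]
  have hRt : R ≠ ∞ := ENNReal.mul_ne_top (P2_ne_top _) hωnt
  have e1 : R ^ (-σ) = ω ^ (σ / n) * P2 (-τ * (σ / n)) := by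
    rw [hR, ENNReal.mul_rpow_of_ne_zero (P2_ne_zero _) hωn0, P2_rpow, ← ENNReal.rpow_mul, mul_comm]
    congr 2
    · ring
    · ring
  have e2 : ω * R ^ (n : ℝ) = P2 τ := by
    rw [hR, ENNReal.mul_rpow_of_ne_zero (P2_ne_zero _) hωn0, P2_rpow, ← ENNReal.rpow_mul]
    have : -(1 / (n : ℝ)) * n = -1 := by field_simp
    rw [this, ENNReal.rpow_neg_one, mul_left_comm, ENNReal.mul_inv_cancel hω0 hωt, mul_one]
    congr 1; field_simp
  rw [← e1, ← e2]
  refine le_trans (measure_mono ?_) (vol_eball n 0 hRt)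
  intro x hx
  change R ^ (-σ) < ‖x‖ₑ ^ (-σ) at hx
  change ‖0 - x‖ₑ ≤ R
  rw [zero_sub, enorm_neg]
  by_contra hcon
  push Not at hcon
  exact absurd (rpow_neg_anti hcon.le hσ.le) (not_le.2 hx)

lemma enorm_rpow_le {n : ℕ} (x : EuclideanSpace ℝ (Fin n)) (r : ℝ) (hr : r ≠ 0) :
    ‖‖x‖ ^ r‖ₑ ≤ ‖x‖ₑ ^ r := by
  by_cases hx : x = 0
  · subst hx; simp [Real.zero_rpow hr]
  · have : 0 < ‖x‖ := norm_pos_iff.2 hx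
    rw [Real.enorm_eq_ofReal (by positivity), ← ENNReal.ofReal_rpow_of_pos this, ofReal_norm]

lemma potl_le (n : ℕ) (hn : 2 ≤ n) (f : EuclideanSpace ℝ (Fin n) → ℝ)
    (x : EuclideanSpace ℝ (Fin n)) :
    ‖potl n f x‖ₑ ≤ ∫⁻ y, ‖x - y‖ₑ ^ (-((n : ℝ) - 1)) * ‖f y‖ₑ := by
  have hn1 : (2 : ℝ) ≤ n := by exact_mod_cast hn
  unfold potl
  refine (enorm_integral_le_lintegral_enorm _).trans ?_
  rw [← lintegral_sub_left_eq_self (fun y => ‖x - y‖ₑ ^ (-((n : ℝ) - 1)) * ‖f y‖ₑ) x]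
  refine lintegral_mono fun y => ?_
  have e : x - (x - y) = y := by abel
  simp only [e]
  rw [enorm_mul, neg_sub]
  gcongr
  exact enorm_rpow_le y _ (by linarith)

/-- Dyadic level sets. -/
def EE {n : ℕ} (g : EuclideanSpace ℝ (Fin n) → ℝ) (k : ℤ) : Set (EuclideanSpace ℝ (Fin n)) :=
  {y | rearr volume g ((2 : ℝ) ^ ((k : ℝ) + 1)) < ‖g y‖ₑ ∧ ‖g y‖ₑ ≤ rearr volume g ((2 : ℝ) ^ (k : ℝ))}

lemma EE_meas {n : ℕ} {g : EuclideanSpace ℝ (Fin n) → ℝ} (hg : Measurable g) (k : ℤ) :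
    MeasurableSet (EE g k) :=
  (measurableSet_lt measurable_const hg.enorm).inter (measurableSet_le hg.enorm measurable_const)

lemma level_vol {n : ℕ} (g : EuclideanSpace ℝ (Fin n) → ℝ) (x : ℝ) :
    volume {y | rearr volume g ((2 : ℝ) ^ x) < ‖g y‖ₑ} ≤ P2 x := by
  have := distrib_rearr_le volume g ((2 : ℝ) ^ x)
  rw [P2_ofReal] at this
  simpa only [distribFn, ← Real.enorm_eq_ofReal_abs] using this

lemma EE_vol {n : ℕ} (g : EuclideanSpace ℝ (Fin n) → ℝ) (k : ℤ) :
    volume (EE g k) ≤ P2 (k + 1) :=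
  (measure_mono fun _ hy => hy.1).trans (level_vol g _)

lemma exists_P2_mul_lt {x : ℝ} (hx : 0 < x) {N v : ℝ≥0∞} (hN : N ≠ ∞) (hv : v ≠ 0) :
    ∃ k : ℕ, P2 (-x * k) * N < v := by
  have h1 : Filter.Tendsto (fun k : ℕ => P2 (-x * k)) Filter.atTop (nhds 0) :=
    ENNReal.tendsto_atTop_zero_of_tsum_ne_top (P2_geom_nat hx)
  have h2 : Filter.Tendsto (fun k : ℕ => P2 (-x * k) * N) Filter.atTop (nhds (0 * N)) :=
    ENNReal.Tendsto.mul_const h1 (Or.inr hN)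
  rw [zero_mul] at h2
  exact (h2.eventually_lt_const (pos_iff_ne_zero.2 hv)).exists

lemma level_decomp {n : ℕ} (g : EuclideanSpace ℝ (Fin n) → ℝ) {x : ℝ} (hx : 0 < x) {N : ℝ≥0∞}
    (hN : N ≠ ∞) (h : ∀ k, dy volume x g k ≤ N) :
    ∀ᵐ y, ‖g y‖ₑ ≤ ∑' k : ℤ, rearr volume g ((2 : ℝ) ^ (k : ℝ)) * (EE g k).indicator 1 y := by
  have hρ : ∀ k : ℤ, rearr volume g ((2 : ℝ) ^ (k : ℝ)) ≤ P2 (-x * k) * N := by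
    intro k
    calc _ = P2 (-x * k) * dy volume x g k := by
          rw [dy, ← mul_assoc, ← P2_add]
          have : -x * k + k * x = 0 := by ring
          rw [this, P2_zero, one_mul]
      _ ≤ _ := by gcongr; exact h k
  have hmono : ∀ k m : ℤ, k ≤ m → rearr volume g ((2 : ℝ) ^ (m : ℝ)) ≤
      rearr volume g ((2 : ℝ) ^ (k : ℝ)) := by
    intro k m hkm
    apply rearr_anti
    exact Real.rpow_le_rpow_of_exponent_le (by norm_num) (by exact_mod_cast hkm)
  have hnull : ∀ᵐ y, ∃ k : ℤ, ‖g y‖ₑ ≤ rearr volume g ((2 : ℝ) ^ (k : ℝ)) := by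
    rw [ae_iff]
    by_contra hne
    obtain ⟨m, hm⟩ := exists_P2_mul_lt (x := 1) one_pos (N := 1) (by simp) hne
    refine absurd hm (not_lt.2 ?_)
    refine le_trans (measure_mono ?_) ((level_vol g (-1 * m)).trans (by rw [mul_one]))
    intro y hy
    have hy' : ¬ ∃ k : ℤ, ‖g y‖ₑ ≤ rearr volume g ((2 : ℝ) ^ (k : ℝ)) := hy
    push Not at hy'
    have := hy' (-m)
    change rearr volume g ((2:ℝ) ^ (-1 * (m:ℝ))) < ‖g y‖ₑ
    convert this using 3
    push_cast; ring
  filter_upwards [hnull] with y hy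
  by_cases hv : ‖g y‖ₑ = 0
  · rw [hv]; exact bot_le
  obtain ⟨m, hm⟩ := exists_P2_mul_lt hx hN hv
  obtain ⟨k, hk1, hk2⟩ := Int.exists_greatest_of_bdd
    (P := fun k : ℤ => ‖g y‖ₑ ≤ rearr volume g ((2 : ℝ) ^ (k : ℝ)))
    ⟨m, fun z hz => by
      by_contra hcon
      push Not at hcon
      have h1 := (hz.trans (hmono m z hcon.le)).trans (hρ m)
      exact absurd (lt_of_lt_of_le (by exact_mod_cast hm) h1) (lt_irrefl _)⟩ hy
  have hmem : y ∈ EE g k := by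
    refine ⟨?_, hk1⟩
    by_contra hcon
    push Not at hcon
    have := hk2 (k + 1) (by push_cast; exact hcon)
    omega
  refine le_trans ?_ (ENNReal.le_tsum k)
  rw [indicator_of_mem hmem]
  simpa using hk1

lemma potl_le_sum (n : ℕ) (hn : 2 ≤ n) {α : ℝ} (hα : 0 < α) (f : EuclideanSpace ℝ (Fin n) → ℝ)
    (hf : Measurable f) {q : ℝ} (hq : 0 < q) {N : ℝ≥0∞} (hN : N ≠ ∞)
    (h : ∀ k, dy volume q (fun x => ‖x‖ ^ α * f x) k ≤ N) (x : EuclideanSpace ℝ (Fin n)) :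
    ‖potl n f x‖ₑ ≤ ∑' k : ℤ, rearr volume (fun x => ‖x‖ ^ α * f x) ((2 : ℝ) ^ (k : ℝ)) *
      VV n α (EE (fun x => ‖x‖ ^ α * f x) k) x := by
  have : Nonempty (Fin n) := ⟨⟨0, by omega⟩⟩
  set g : EuclideanSpace ℝ (Fin n) → ℝ := fun x => ‖x‖ ^ α * f x with hg
  have hgm : Measurable g := by fun_prop
  have hae : ∀ᵐ y : EuclideanSpace ℝ (Fin n), y ≠ 0 := by simp [ae_iff]
  refine (potl_le n hn f x).trans ?_
  set W : EuclideanSpace ℝ (Fin n) → ℝ≥0∞ :=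
    fun y => ‖x - y‖ₑ ^ (-((n : ℝ) - 1)) * ‖y‖ₑ ^ (-α) with hW
  have hWm : Measurable W := by fun_prop
  calc _ ≤ ∫⁻ y, ∑' k : ℤ, rearr volume g ((2 : ℝ) ^ (k : ℝ)) * (EE g k).indicator W y := by
        refine lintegral_mono_ae ?_
        filter_upwards [hae, level_decomp g hq hN h] with y hy hyd
        have hy0 : ‖y‖ₑ ≠ 0 := by simpa using hy
        have e1 : ‖f y‖ₑ = ‖y‖ₑ ^ (-α) * ‖g y‖ₑ := by
          have hpos : 0 < ‖y‖ := norm_pos_iff.2 hy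
          rw [hg]
          simp only
          rw [enorm_mul, Real.enorm_eq_ofReal (r := ‖y‖ ^ α) (by positivity), ← ENNReal.ofReal_rpow_of_pos hpos,
            ofReal_norm, ← mul_assoc, ← ENNReal.rpow_add _ _ hy0 enorm_ne_top]
          simp
        calc _ = W y * ‖g y‖ₑ := by rw [e1, hW]; ring
          _ ≤ W y * ∑' k : ℤ, rearr volume g ((2 : ℝ) ^ (k : ℝ)) * (EE g k).indicator 1 y := by gcongr
          _ = _ := by
            rw [← ENNReal.tsum_mul_left]
            congr 1; ext k
            by_cases hk : y ∈ EE g k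
            · rw [indicator_of_mem hk, indicator_of_mem hk]; simp [mul_comm]
            · rw [indicator_of_notMem hk, indicator_of_notMem hk]; simp
    _ = _ := by
        rw [lintegral_tsum fun k => ((hWm.indicator (EE_meas hgm k)).const_mul _).aemeasurable]
        congr 1; ext k
        rw [lintegral_const_mul _ (hWm.indicator (EE_meas hgm k)),
          lintegral_indicator (EE_meas hgm k)]
        rfl

lemma core_rearr (n : ℕ) (hn : 2 ≤ n) {α σ : ℝ} (hα : 0 < α) (hα1 : α < 1) (hσ : 0 < σ) :
    ∃ C₀ C₁ C₂ : ℝ≥0∞, C₀ ≠ ∞ ∧ C₁ ≠ ∞ ∧ C₂ ≠ ∞ ∧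
    ∀ f : EuclideanSpace ℝ (Fin n) → ℝ, Measurable f → ∀ (q : ℝ), 0 < q →
      ∀ N : ℝ≥0∞, N ≠ ∞ → (∀ k, dy volume q (fun x => ‖x‖ ^ α * f x) k ≤ N) → ∀ j : ℤ,
      rearr volume (fun x => ‖x‖ ^ (-σ) * potl n f x) ((2 : ℝ) ^ (j : ℝ)) ≤
        C₀ * P2 (-(j - 1) * (σ / n)) *
        (C₂ * (∑' k : ℤ, if k < j then rearr volume (fun x => ‖x‖ ^ α * f x) ((2 : ℝ) ^ (k : ℝ)) *
            P2 ((k + 1) * (1 - α / n)) else 0) * P2 (-(j - 1) * (1 - 1 / n)) +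
         C₁ * ∑' k : ℤ, if k < j then 0 else
          rearr volume (fun x => ‖x‖ ^ α * f x) ((2 : ℝ) ^ (k : ℝ)) * P2 ((k + 1) * ((1 - α) / n))) := by
  have hn1 : (2 : ℝ) ≤ n := by exact_mod_cast hn
  obtain ⟨C₀, hC₀, hC₀0, h0⟩ := weight_vol n hn hσ
  obtain ⟨C₁, hC₁, h1⟩ := VV_sup n hn hα hα1
  obtain ⟨C₂, hC₂, h2⟩ := VV_int n hn hα hα1
  refine ⟨C₀, C₁, C₂, hC₀, hC₁, hC₂, fun f hf q hq N hN hk j => ?_⟩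
  have hpot := potl_le_sum n hn hα f hf hq hN hk
  set g : EuclideanSpace ℝ (Fin n) → ℝ := fun x => ‖x‖ ^ α * f x with hg
  have hgm : Measurable g := by fun_prop
  set ρ : ℤ → ℝ≥0∞ := fun k => rearr volume g ((2 : ℝ) ^ (k : ℝ)) with hρ
  set S₁ := ∑' k : ℤ, if k < j then ρ k * P2 ((k + 1) * (1 - α / n)) else 0 with hS₁
  set S₂ := ∑' k : ℤ, if k < j then 0 else ρ k * P2 ((k + 1) * ((1 - α) / n)) with hS₂
  set F₁ : EuclideanSpace ℝ (Fin n) → ℝ≥0∞ :=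
    fun x => ∑' k : ℤ, if k < j then ρ k * VV n α (EE g k) x else 0 with hF₁
  have hT : ∀ k, Measurable fun x : EuclideanSpace ℝ (Fin n) =>
      if k < j then ρ k * VV n α (EE g k) x else 0 := by
    intro k
    split_ifs
    · exact (VV_meas n α _).const_mul _
    · exact measurable_const
  have hF₁m : Measurable F₁ := Measurable.ennreal_tsum hT
  have hFle : ∀ x, ‖potl n f x‖ₑ ≤ F₁ x + C₁ * S₂ := by
    intro x
    refine (hpot x).trans ?_
    rw [hF₁, hS₂, ← ENNReal.tsum_mul_left, ← ENNReal.tsum_add]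
    refine ENNReal.tsum_le_tsum fun k => ?_
    by_cases hkj : k < j
    · simp [hkj, hρ]
    · simp only [hkj, if_false, zero_add]
      calc ρ k * VV n α (EE g k) x ≤ ρ k * (C₁ * volume (EE g k) ^ ((1 - α) / n)) := by
            gcongr; exact h1 x _ (EE_meas hgm k)
        _ ≤ ρ k * (C₁ * P2 (k + 1) ^ ((1 - α) / n)) := by
            have : 0 ≤ (1 - α) / (n : ℝ) := div_nonneg (by linarith) (by linarith)
            gcongr
            exact EE_vol g k
        _ = _ := by rw [P2_rpow]; ring
  have hexp : 0 ≤ 1 - α / (n : ℝ) := by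
    rw [sub_nonneg, div_le_one (by linarith)]; linarith
  have hFint : ∀ B, MeasurableSet B → ∫⁻ x in B, F₁ x ≤ C₂ * S₁ * volume B ^ (1 / (n : ℝ)) := by
    intro B hB
    rw [hF₁, lintegral_tsum fun k => (hT k).aemeasurable, hS₁, ← ENNReal.tsum_mul_left,
      ← ENNReal.tsum_mul_right]
    refine ENNReal.tsum_le_tsum fun k => ?_
    by_cases hkj : k < j
    · simp only [hkj, if_true]
      rw [lintegral_const_mul _ (VV_meas n α _)]
      calc _ ≤ ρ k * (C₂ * volume B ^ (1 / (n : ℝ)) * volume (EE g k) ^ (1 - α / n)) := by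
            gcongr; exact h2 B _ hB (EE_meas hgm k)
        _ ≤ ρ k * (C₂ * volume B ^ (1 / (n : ℝ)) * P2 (k + 1) ^ (1 - α / n)) := by
            gcongr; exact EE_vol g k
        _ = _ := by rw [P2_rpow]; ring
    · simp [hkj]
  have hν : 1 / (n : ℝ) < 1 := by rw [div_lt_one (by linarith)]; linarith
  have hweak := weak_of_int volume F₁ hF₁m hν (C₂ * S₁) hFint ((j : ℝ) - 1)
  set m := C₀ * P2 (-(j - 1) * (σ / n)) with hm
  have hm0 : m ≠ 0 := mul_ne_zero hC₀0 (P2_ne_zero _)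
  have hmt : m ≠ ∞ := ENNReal.mul_ne_top hC₀ (P2_ne_top _)
  set Λ := C₂ * S₁ * P2 (-(j - 1) * (1 - 1 / n)) with hΛ
  refine rearr_le_of_forall_lt _ _ _ _ fun l hl => ?_
  have hl1 : Λ + C₁ * S₂ < l / m := by
    rw [ENNReal.lt_div_iff_mul_lt (Or.inl hm0) (Or.inl hmt), mul_comm]
    exact hl
  have hl2 : Λ < l / m - C₁ * S₂ := lt_tsub_iff_right.2 hl1
  have hsub : {x | l < ENNReal.ofReal |‖x‖ ^ (-σ) * potl n f x|} ⊆
      {x | m < ‖x‖ₑ ^ (-σ)} ∪ {x | l / m - C₁ * S₂ < F₁ x} := by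
    intro x hx
    change l < ENNReal.ofReal |‖x‖ ^ (-σ) * potl n f x| at hx
    rw [← Real.enorm_eq_ofReal_abs, enorm_mul] at hx
    by_cases hxm : m < ‖x‖ₑ ^ (-σ)
    · exact Or.inl hxm
    right
    push Not at hxm
    have h3 : l < m * (F₁ x + C₁ * S₂) := by
      refine lt_of_lt_of_le hx ?_
      gcongr
      · exact (enorm_rpow_le x _ (by linarith)).trans hxm
      · exact hFle x
    have h4 : l / m < F₁ x + C₁ * S₂ := by
      rw [ENNReal.div_lt_iff (Or.inl hm0) (Or.inl hmt), mul_comm]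
      exact h3
    have hfin : C₁ * S₂ ≠ ∞ := by
      intro htop
      rw [htop] at hl1
      simp at hl1
    change l / m - C₁ * S₂ < F₁ x
    exact ENNReal.sub_lt_of_lt_add (le_add_self.trans hl1.le) h4
  calc distribFn volume _ l ≤ _ := measure_mono hsub
    _ ≤ _ := measure_union_le _ _
    _ ≤ P2 ((j : ℝ) - 1) + P2 ((j : ℝ) - 1) := by
        gcongr
        · exact h0 _
        · exact hweak _ hl2
    _ = ENNReal.ofReal ((2 : ℝ) ^ (j : ℝ)) := by
        rw [P2_ofReal, ← two_mul, ← P2_one, ← P2_add]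
        congr 1; ring

lemma core_dy (n : ℕ) (hn : 2 ≤ n) {α σ x y δ : ℝ} (hα : 0 < α) (hα1 : α < 1) (hσ : 0 < σ)
    (hx : 0 < x) (hbal : α / n + σ / n - 1 / n = y - x)
    (hδ1 : δ ≤ 1 - α / n - x) (hδ2 : δ ≤ y - σ / n) :
    ∃ C : ℝ≥0∞, C ≠ ∞ ∧ ∀ f : EuclideanSpace ℝ (Fin n) → ℝ, Measurable f →
      ∀ N : ℝ≥0∞, N ≠ ∞ → (∀ k, dy volume x (fun x => ‖x‖ ^ α * f x) k ≤ N) → ∀ j : ℤ,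
      dy volume y (fun x => ‖x‖ ^ (-σ) * potl n f x) j ≤
        C * ∑' k : ℤ, P2 (-δ * |((j - k : ℤ) : ℝ)|) * dy volume x (fun x => ‖x‖ ^ α * f x) k := by
  obtain ⟨C₀, C₁, C₂, hC₀, hC₁, hC₂, h⟩ := core_rearr n hn hα hα1 hσ
  have hn1 : (2 : ℝ) ≤ n := by exact_mod_cast hn
  have hν0 : 0 < 1 / (n : ℝ) := by positivity
  have hA0 : 0 < α / (n : ℝ) := by positivity
  have hsub : (1 - α) / (n : ℝ) = 1 / n - α / n := by ring
  have hν2 : 1 / (n : ℝ) ≤ 1 := by rw [div_le_one (by linarith)]; linarith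
  set c := σ / n + 2 with hc
  refine ⟨C₀ * (C₂ + C₁) * P2 c, ENNReal.mul_ne_top (ENNReal.mul_ne_top hC₀
    (ENNReal.add_ne_top.2 ⟨hC₂, hC₁⟩)) (P2_ne_top _), fun f hf N hN hk j => ?_⟩
  have key := h f hf x hx N hN hk j
  set g : EuclideanSpace ℝ (Fin n) → ℝ := fun x => ‖x‖ ^ α * f x with hg
  set S := ∑' k : ℤ, P2 (-δ * |((j - k : ℤ) : ℝ)|) * dy volume x g k with hS
  set S₁ := ∑' k : ℤ, if k < j then rearr volume g ((2 : ℝ) ^ (k : ℝ)) *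
            P2 ((k + 1) * (1 - α / n)) else 0 with hS₁
  set S₂ := ∑' k : ℤ, if k < j then 0 else
          rearr volume g ((2 : ℝ) ^ (k : ℝ)) * P2 ((k + 1) * ((1 - α) / n)) with hS₂
  have b1 : P2 (j * y) * P2 (-(j - 1) * (σ / n)) * P2 (-(j - 1) * (1 - 1 / n)) * S₁ ≤ P2 c * S := by
    rw [hS₁, hS, ← ENNReal.tsum_mul_left, ← ENNReal.tsum_mul_left]
    refine ENNReal.tsum_le_tsum fun k => ?_
    by_cases hkj : k < j
    · simp only [hkj, if_true]
      set R := rearr volume g ((2 : ℝ) ^ (k : ℝ)) with hR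
      have e1 : P2 (j * y) * P2 (-(j - 1) * (σ / n)) * P2 (-(j - 1) * (1 - 1 / n)) *
          (R * P2 ((k + 1) * (1 - α / n))) = P2 (j * y + -(j - 1) * (σ / n) +
            -(j - 1) * (1 - 1 / n) + (k + 1) * (1 - α / n)) * R := by
        rw [P2_add, P2_add, P2_add]; ring
      have e2 : P2 c * (P2 (-δ * |((j - k : ℤ) : ℝ)|) * dy volume x g k) =
          P2 (c + -δ * |((j - k : ℤ) : ℝ)| + k * x) * R := by
        rw [P2_add _ (k * x), P2_add c, dy, ← hR]; ring
      rw [e1, e2]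
      refine mul_le_mul_left ?_ R
      apply P2_mono
      have hkj' : (k : ℝ) + 1 ≤ j := by exact_mod_cast hkj
      push_cast
      rw [abs_of_nonneg (by linarith)]
      have hy : y = x + α / n + σ / n - 1 / n := by linarith
      rw [hy]
      nlinarith [mul_nonneg (sub_nonneg.2 hδ1) (by linarith : (0 : ℝ) ≤ j - k)]
    · simp [hkj]
  have b2 : P2 (j * y) * P2 (-(j - 1) * (σ / n)) * S₂ ≤ P2 c * S := by
    rw [hS₂, hS, ← ENNReal.tsum_mul_left, ← ENNReal.tsum_mul_left]
    refine ENNReal.tsum_le_tsum fun k => ?_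
    by_cases hkj : k < j
    · simp [hkj]
    · simp only [hkj, if_false]
      set R := rearr volume g ((2 : ℝ) ^ (k : ℝ)) with hR
      have e1 : P2 (j * y) * P2 (-(j - 1) * (σ / n)) *
          (R * P2 ((k + 1) * ((1 - α) / n))) = P2 (j * y + -(j - 1) * (σ / n) +
            (k + 1) * ((1 - α) / n)) * R := by
        rw [P2_add, P2_add]; ring
      have e2 : P2 c * (P2 (-δ * |((j - k : ℤ) : ℝ)|) * dy volume x g k) =
          P2 (c + -δ * |((j - k : ℤ) : ℝ)| + k * x) * R := by
        rw [P2_add _ (k * x), P2_add c, dy, ← hR]; ring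
      rw [e1, e2]
      refine mul_le_mul_left ?_ R
      apply P2_mono
      have hkj' : (j : ℝ) ≤ k := by exact_mod_cast not_lt.1 hkj
      push_cast
      rw [abs_of_nonpos (by linarith), hsub]
      have hxx : x = y - α / n - σ / n + 1 / n := by linarith
      rw [hxx]
      nlinarith [mul_nonneg (sub_nonneg.2 hδ2) (by linarith : (0 : ℝ) ≤ k - j)]
  calc dy volume y (fun x => ‖x‖ ^ (-σ) * potl n f x) j
      ≤ P2 (j * y) * (C₀ * P2 (-(j - 1) * (σ / n)) *
        (C₂ * S₁ * P2 (-(j - 1) * (1 - 1 / n)) + C₁ * S₂)) := by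
        rw [dy]; gcongr
    _ = C₀ * (C₂ * (P2 (j * y) * P2 (-(j - 1) * (σ / n)) * P2 (-(j - 1) * (1 - 1 / n)) * S₁) +
        C₁ * (P2 (j * y) * P2 (-(j - 1) * (σ / n)) * S₂)) := by ring
    _ ≤ C₀ * (C₂ * (P2 c * S) + C₁ * (P2 c * S)) := by gcongr
    _ = _ := by ring

/-- Corollary 5.4 of the paper in the Euclidean case: the Stein–Weiss type weighted
Lorentz estimate `‖|x|^{-σ} T f‖_{s,q₃} ≤ C ‖|x|^α f‖_{p,q₂}`. -/
theorem stmt_16 (n : ℕ) (hn : 2 ≤ n) (p s α σ : ℝ)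
    (hp : 1 < p) (hps : p ≤ s) (hα : 0 < α) (hσ0 : 0 < σ)
    (hα1 : 1 - (n : ℝ) / p < α) (hα2 : α < (n : ℝ) / (p / (p - 1)))
    (hσ : σ < (n : ℝ) / s)
    (hbal : α + σ - 1 = (n : ℝ) / s - (n : ℝ) / p)
    (q₂ q₃ : ℝ≥0∞) (hq₂ : 1 ≤ q₂) (hq₂₃ : q₂ ≤ q₃) :
    ∃ C : ℝ, 0 < C ∧ ∀ f : EuclideanSpace ℝ (Fin n) → ℝ, Measurable f →
      lorentz volume (ENNReal.ofReal s) q₃ (fun x => ‖x‖ ^ (-σ) * potl n f x) ≤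
        ENNReal.ofReal C *
          lorentz volume (ENNReal.ofReal p) q₂ (fun x => ‖x‖ ^ α * f x) := by

  have hn1 : (2 : ℝ) ≤ n := by exact_mod_cast hn
  have hn0 : (0 : ℝ) < n := by linarith
  have hp0 : 0 < p := by linarith
  have hs0 : 0 < s := by linarith
  have hinv : s⁻¹ ≤ p⁻¹ := inv_anti₀ hp0 hps
  have hα1' : α < 1 := by
    have h1 : (n : ℝ) / s ≤ n / p := div_le_div_of_nonneg_left hn0.le hp0 hps
    linarith
  have hbal' : α / n + σ / n - 1 / n = s⁻¹ - p⁻¹ := by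
    have : (α + σ - 1) / n = ((n : ℝ) / s - (n : ℝ) / p) / n := by rw [hbal]
    calc α / n + σ / n - 1 / n = (α + σ - 1) / n := by ring
      _ = _ := by rw [this]; field_simp
  have hd1 : 0 < 1 - α / n - p⁻¹ := by
    have h1 : α / n < (n : ℝ) / (p / (p - 1)) / n := by gcongr
    have h2 : (n : ℝ) / (p / (p - 1)) / n = 1 - p⁻¹ := by
      have : p - 1 ≠ 0 := by linarith
      field_simp
    linarith
  have hd2 : 0 < s⁻¹ - σ / n := by
    have h1 : σ / n < (n : ℝ) / s / n := by gcongr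
    have h2 : (n : ℝ) / s / n = s⁻¹ := by field_simp
    linarith
  set δ := min (1 - α / n - p⁻¹) (s⁻¹ - σ / n) with hδ
  have hδ0 : 0 < δ := lt_min hd1 hd2
  obtain ⟨C, hC, h⟩ := core_dy n hn (x := p⁻¹) (y := s⁻¹) (δ := δ) hα hα1' hσ0 (by positivity)
    hbal' (min_le_left _ _) (min_le_right _ _)
  set W := ∑' i : ℤ, P2 (-δ * |(i : ℝ)|) with hW
  have hWt : W ≠ ∞ := P2_geom_int hδ0
  set K := P2 s⁻¹ * (C * W * (2 * P2 p⁻¹)) with hK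
  have hKt : K ≠ ∞ := ENNReal.mul_ne_top (P2_ne_top _) (ENNReal.mul_ne_top
    (ENNReal.mul_ne_top hC hWt) (ENNReal.mul_ne_top (by simp) (P2_ne_top _)))
  have hq₃ : 1 ≤ q₃ := hq₂.trans hq₂₃
  refine ⟨K.toReal + 1, by positivity, fun f hf => ?_⟩
  have hKle : K ≤ ENNReal.ofReal (K.toReal + 1) := by
    rw [← ENNReal.ofReal_toReal hKt]
    apply ENNReal.ofReal_le_ofReal
    simp
  set g : EuclideanSpace ℝ (Fin n) → ℝ := fun x => ‖x‖ ^ α * f x with hg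
  set G : EuclideanSpace ℝ (Fin n) → ℝ := fun x => ‖x‖ ^ (-σ) * potl n f x with hG
  by_cases hL : lorentz volume (ENNReal.ofReal p) q₂ g = ∞
  · rw [hL, ENNReal.mul_top]
    · exact le_top
    · simp only [ne_eq, ENNReal.ofReal_eq_zero, not_le]; positivity
  have hlow := lq_le_lorentz volume hp0 hq₂ g
  have hN : lq q₂ (dy volume p⁻¹ g) ≠ ∞ := ne_top_of_le_ne_top
    (ENNReal.mul_ne_top (ENNReal.mul_ne_top (by simp) (P2_ne_top _)) hL) hlow
  have hj := h f hf _ hN (le_lq hq₂ _)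
  have hy := lq_young hq₂ (fun i : ℤ => P2 (-δ * |(i : ℝ)|)) (dy volume p⁻¹ g) (dy volume s⁻¹ G) C hj
  calc lorentz volume (ENNReal.ofReal s) q₃ G ≤ P2 s⁻¹ * lq q₃ (dy volume s⁻¹ G) :=
        lorentz_le_lq volume hs0 hq₃ G
    _ ≤ P2 s⁻¹ * lq q₂ (dy volume s⁻¹ G) := by gcongr; exact lq_mono_exp hq₂ hq₂₃ _
    _ ≤ P2 s⁻¹ * (C * W * (2 * P2 p⁻¹ * lorentz volume (ENNReal.ofReal p) q₂ g)) := by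
        gcongr
        refine hy.trans ?_
        gcongr
    _ = K * lorentz volume (ENNReal.ofReal p) q₂ g := by rw [hK]; ring
    _ ≤ _ := by gcongr
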